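/- arXiv:1701.02452 — 2 statements merged into one kernel-verified Lean document; each statement's English description precedes it below -/
import Mathlib

section
/- Under these hypotheses, F_S is equal to the Dirichlet fundamental domain F = {x ∈ X : d(0,x) ≤ d(g.0, x) for all g ∈ Γ} of Γ centered at the base point 0. -/
/-- A geodesic metric space: any two points are joined by a geodesic parametrized by
arc length on `[0, dist x y]`. -/
def IsGeodesicSpace (X : Type*) [MetricSpace X] : Prop :=
  ∀ x y : X, ∃ γ : ℝ → X, γ 0 = x ∧ γ (dist x y) = y ∧
    ∀ s ∈ Set.Icc (0:ℝ) (dist x y), ∀ t ∈ Set.Icc (0:ℝ) (dist x y),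
      dist (γ s) (γ t) = |s - t|

/-!
Call `a, b : Γ` equivalent at a point of `ball (a • x₀) ρ ∩ ball (b • x₀) ρ` when `a⁻¹ * b ∈ S`,
with `ρ` slightly larger than `r₁ / 2`. Closure of `S` under products of small displacement makes
this an equivalence relation at each point, so the balls `ball (a • x₀) ρ` can be glued along it.
Every point of `ball (a • x₀) ρ` is within `r₀ < ρ` of an equivalent centre, so the glued space
covers `X`, and it is path connected because `S` generates `Γ` and moves `x₀` by less than `2ρ`.
As `X` is simply connected, the covering has one sheet: `g ∈ S` as soon as the balls around `x₀`
and `g • x₀` meet. A point of `F_S` closer to `g • x₀` than to `x₀` lies in both balls, so its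
defining inequality for this `g ∈ S` is contradicted.
-/

open Metric Set Topology

section Covering

variable {E X : Type*} [TopologicalSpace E] [TopologicalSpace X] {f : E → X}

theorem isEvenlyCovered_of_sections {I : Type*} {V : Set X} {x : X} (hV : IsOpen V) (hx : x ∈ V)
    (σ : I → V → E) (hcont : ∀ i, Continuous (σ i)) (hopen : ∀ i, IsOpenMap (σ i))
    (hsection : ∀ i v, f (σ i v) = v) (hcover : ∀ e, f e ∈ V → ∃ i v, σ i v = e)
    (hdisjoint : ∀ i j v, σ i v = σ j v → i = j) : IsEvenlyCovered f x (f ⁻¹' {x}) := by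
  let _ : TopologicalSpace I := ⊥
  have : DiscreteTopology I := ⟨rfl⟩
  let τ : V × I → E := fun p => σ p.2 p.1
  have τ_cont : Continuous τ := continuous_prod_of_discrete_right.2 hcont
  have τ_open : IsOpenMap τ := by
    intro W hW
    have : τ '' W = ⋃ i, σ i '' ((·, i) ⁻¹' W) := by
      ext e
      simp only [τ, mem_image, Prod.exists, mem_iUnion, mem_preimage]
      exact exists_comm
    rw [this]
    exact isOpen_iUnion fun i => hopen i _ (hW.preimage (Continuous.prodMk_left i))
  have τ_inj : Function.Injective τ := by
    rintro ⟨v, i⟩ ⟨w, j⟩ h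
    obtain rfl : v = w := Subtype.ext <| by rw [← hsection i v, ← hsection j w]; exact congrArg f h
    exact congrArg (v, ·) (hdisjoint i j v h)
  have τ_range : range τ = f ⁻¹' V := by
    ext e
    constructor
    · rintro ⟨⟨v, i⟩, rfl⟩
      simp [τ, hsection]
    · intro he
      obtain ⟨i, v, rfl⟩ := hcover e he
      exact ⟨(v, i), rfl⟩
  have hτ : IsOpenEmbedding τ := .of_continuous_injective_isOpenMap τ_cont τ_inj τ_open
  let H : f ⁻¹' V ≃ₜ V × I := ((hτ.toIsEmbedding.toHomeomorph).trans (.setCongr τ_range)).symm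
  have hH (p : V × I) : f (H.symm p) = p.1 := hsection p.2 p.1
  refine IsEvenlyCovered.to_isEvenlyCovered_preimage
    ⟨inferInstance, V, hx, hV, τ_range ▸ hτ.isOpen_range, H, fun e => ?_⟩
  rw [← hH, H.symm_apply_apply]

theorem eq_of_joined_of_isCoveringMap [SimplyConnectedSpace X] (hf : IsCoveringMap f) {e e' : E}
    (hjoined : Joined e e') (h : f e = f e') : e = e' := by
  obtain ⟨p⟩ := hjoined
  have hlift : hf.monodromy (.refl (f e)) ⟨e, rfl⟩ = ⟨e', h.symm⟩ :=
    hf.monodromy_eq_of_map_eq (.mk p) (Subsingleton.elim _ _)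
  rw [hf.monodromy_refl] at hlift
  exact congrArg Subtype.val hlift

end Covering

/-- Data for gluing a family of open subsets of `X` into a space over `X`: the copies of a point in
`patch i` and `patch j` are to be identified exactly when `Rel i j`, so `Rel` only has to be
transitive at common points of the patches. -/
structure PatchGluing (ι X : Type*) [TopologicalSpace X] where
  patch : ι → Set X
  isOpen_patch : ∀ i, IsOpen (patch i)
  Rel : ι → ι → Prop
  refl : ∀ i, Rel i i
  symm : ∀ {i j}, Rel i j → Rel j i
  trans : ∀ {i j k x}, x ∈ patch i → x ∈ patch j → x ∈ patch k → Rel i j → Rel j k → Rel i k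

namespace PatchGluing

variable {ι X : Type*} [TopologicalSpace X] (G : PatchGluing ι X)

/-- The identification of the points of the disjoint union of the patches. -/
def setoid : Setoid (Σ i, G.patch i) where
  r p q := (p.2 : X) = q.2 ∧ G.Rel p.1 q.1
  iseqv :=
    { refl := fun _ => ⟨rfl, G.refl _⟩
      symm := fun h => ⟨h.1.symm, G.symm h.2⟩
      trans := fun {p q s} h h' => ⟨h.1.trans h'.1,
        G.trans p.2.2 (h.1 ▸ q.2.2) ((h.1.trans h'.1) ▸ s.2.2) h.2 h'.2⟩ }

/-- The space glued from the patches, with the quotient topology. -/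
def Space : Type _ := Quotient G.setoid

instance : TopologicalSpace G.Space := inferInstanceAs (TopologicalSpace (Quotient G.setoid))

/-- The canonical map of a patch into the glued space. -/
def ofPatch (i : ι) (x : G.patch i) : G.Space := Quotient.mk G.setoid ⟨i, x⟩

/-- The projection of the glued space to the space containing the patches. -/
def proj : G.Space → X := Quotient.lift (fun p => (p.2 : X)) fun _ _ h => h.1

variable {G}

theorem ofPatch_eq_ofPatch {i j : ι} {x : G.patch i} {y : G.patch j} :
    G.ofPatch i x = G.ofPatch j y ↔ (x : X) = y ∧ G.Rel i j :=
  Quotient.eq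

theorem exists_ofPatch_eq (e : G.Space) : ∃ i x, G.ofPatch i x = e := by
  obtain ⟨⟨i, x⟩, rfl⟩ := Quotient.exists_rep e
  exact ⟨i, x, rfl⟩

theorem continuous_ofPatch (i : ι) : Continuous (G.ofPatch i) :=
  continuous_quotient_mk'.comp continuous_sigmaMk

theorem isOpenMap_ofPatch (i : ι) : IsOpenMap (G.ofPatch i) := by
  intro U hU
  refine isQuotientMap_quotient_mk'.isOpen_preimage.1 (isOpen_sigma_iff.2 fun j => ?_)
  have hpreimage : G.ofPatch j ⁻¹' (G.ofPatch i '' U) =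
      {y : G.patch j | (y : X) ∈ Subtype.val '' U ∧ G.Rel i j} := by
    ext y
    constructor
    · rintro ⟨x, hxU, hxy⟩
      exact ⟨⟨x, hxU, (ofPatch_eq_ofPatch.1 hxy).1⟩, (ofPatch_eq_ofPatch.1 hxy).2⟩
    · rintro ⟨⟨x, hxU, hxy⟩, hij⟩
      exact ⟨x, hxU, ofPatch_eq_ofPatch.2 ⟨hxy, hij⟩⟩
  change IsOpen (G.ofPatch j ⁻¹' (G.ofPatch i '' U))
  rw [hpreimage]
  exact (((G.isOpen_patch i).isOpenMap_subtype_val U hU).preimage continuous_subtype_val).and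
    isOpen_const

variable (G) in
/-- Every point has an open neighbourhood on which each class of patches meeting it is represented
by a patch containing it: the condition for the projection of the glued space to be a covering. -/
def IsUniform : Prop :=
  ∀ x, ∃ V, IsOpen V ∧ x ∈ V ∧ ∀ i, (G.patch i ∩ V).Nonempty → ∃ j, V ⊆ G.patch j ∧ G.Rel i j

theorem IsUniform.isCoveringMap_proj (h : G.IsUniform) : IsCoveringMap G.proj := by
  intro x
  obtain ⟨V, hV, hxV, hrep⟩ := h x
  let sheet (i : {i // V ⊆ G.patch i}) (v : V) : G.Space := G.ofPatch i (inclusion i.2 v)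
  -- Indexing by the sections themselves, not by patches, identifies the equivalent patches.
  refine isEvenlyCovered_of_sections (I := range sheet) hV hxV Subtype.val ?_ ?_ ?_ ?_ ?_
  · rintro ⟨_, i, rfl⟩
    exact (continuous_ofPatch _).comp (continuous_inclusion i.2)
  · rintro ⟨_, i, rfl⟩
    exact (isOpenMap_ofPatch _).comp (hV.isOpenMap_inclusion i.2)
  · rintro ⟨_, i, rfl⟩ v
    rfl
  · intro e he
    obtain ⟨i, y, rfl⟩ := exists_ofPatch_eq e
    obtain ⟨j, hVj, hij⟩ := hrep i ⟨y, y.2, he⟩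
    exact ⟨⟨sheet ⟨j, hVj⟩, mem_range_self _⟩, ⟨y, he⟩, ofPatch_eq_ofPatch.2 ⟨rfl, G.symm hij⟩⟩
  · rintro ⟨_, i, rfl⟩ ⟨_, j, rfl⟩ v hv
    exact Subtype.ext <| funext fun _ => ofPatch_eq_ofPatch.2 ⟨rfl, (ofPatch_eq_ofPatch.1 hv).2⟩

theorem joined_ofPatch {i : ι} (hi : IsPathConnected (G.patch i)) (x y : G.patch i) :
    Joined (G.ofPatch i x) (G.ofPatch i y) := by
  have := isPathConnected_iff_pathConnectedSpace.1 hi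
  exact (PathConnectedSpace.joined x y).map (continuous_ofPatch i)

theorem joined_ofPatch_of_reflTransGen (hpath : ∀ i, IsPathConnected (G.patch i)) {i j : ι}
    (hij : Relation.ReflTransGen (fun i j => G.Rel i j ∧ (G.patch i ∩ G.patch j).Nonempty) i j)
    (x : G.patch i) (y : G.patch j) : Joined (G.ofPatch i x) (G.ofPatch j y) := by
  induction hij with
  | refl => exact joined_ofPatch (hpath i) x y
  | @tail k l _ hkl ih =>
    obtain ⟨hrel, z, hzk, hzl⟩ := hkl
    have hglue : G.ofPatch k ⟨z, hzk⟩ = G.ofPatch l ⟨z, hzl⟩ := ofPatch_eq_ofPatch.2 ⟨rfl, hrel⟩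
    exact (hglue ▸ ih ⟨z, hzk⟩).trans (joined_ofPatch (hpath l) _ y)

theorem IsUniform.rel_of_reflTransGen [SimplyConnectedSpace X] (h : G.IsUniform)
    (hpath : ∀ i, IsPathConnected (G.patch i)) {i j : ι}
    (hij : Relation.ReflTransGen (fun i j => G.Rel i j ∧ (G.patch i ∩ G.patch j).Nonempty) i j)
    (hmeet : (G.patch i ∩ G.patch j).Nonempty) : G.Rel i j := by
  obtain ⟨x, hxi, hxj⟩ := hmeet
  exact (ofPatch_eq_ofPatch.1 <| eq_of_joined_of_isCoveringMap h.isCoveringMap_proj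
    (joined_ofPatch_of_reflTransGen hpath hij ⟨x, hxi⟩ ⟨x, hxj⟩) rfl).2

end PatchGluing

namespace IsGeodesicSpace

variable {X : Type*} [MetricSpace X]

theorem isPathConnected_ball (hX : IsGeodesicSpace X) (c : X) {r : ℝ} (hr : 0 < r) :
    IsPathConnected (ball c r) := by
  refine ⟨c, mem_ball_self hr, fun {y} hy => ?_⟩
  obtain ⟨γ, hγc, hγy, hγ⟩ := hX c y
  have hcont : ContinuousOn γ (Icc 0 (dist c y)) :=
    (LipschitzOnWith.of_dist_le_mul (K := 1) fun s hs t ht => by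
      rw [hγ s hs t ht, Real.dist_eq, NNReal.coe_one, one_mul]).continuousOn
  have hzero : (0 : ℝ) ∈ Icc 0 (dist c y) := left_mem_Icc.2 dist_nonneg
  have himage : IsPathConnected (γ '' Icc 0 (dist c y)) :=
    ((convex_Icc 0 (dist c y)).isPathConnected ⟨0, hzero⟩).image' hcont
  refine (himage.joinedIn c ⟨0, hzero, hγc⟩ y
    ⟨dist c y, right_mem_Icc.2 dist_nonneg, hγy⟩).mono ?_
  rintro _ ⟨t, ht, rfl⟩
  calc dist (γ t) c = t := by rw [← hγc, hγ t ht 0 hzero, sub_zero, abs_of_nonneg ht.1]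
    _ ≤ dist c y := ht.2
    _ < r := mem_ball'.1 hy

theorem exists_dist_eq_half (hX : IsGeodesicSpace X) (x y : X) :
    ∃ m, dist m x = dist x y / 2 ∧ dist m y = dist x y / 2 := by
  obtain ⟨γ, hγx, hγy, hγ⟩ := hX x y
  have hnonneg : 0 ≤ dist x y := dist_nonneg
  have hmid : dist x y / 2 ∈ Icc 0 (dist x y) := ⟨by linarith, by linarith⟩
  refine ⟨γ (dist x y / 2), ?_, ?_⟩
  · nth_rw 2 [← hγx]
    rw [hγ _ hmid 0 (left_mem_Icc.2 hnonneg), sub_zero, abs_of_nonneg hmid.1]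
  · nth_rw 2 [← hγy]
    rw [hγ _ hmid _ (right_mem_Icc.2 hnonneg), abs_sub_comm, sub_half, abs_of_nonneg hmid.1]

theorem ball_inter_ball_nonempty (hX : IsGeodesicSpace X) {x y : X} {r : ℝ}
    (h : dist x y < 2 * r) : (ball x r ∩ ball y r).Nonempty := by
  obtain ⟨m, hmx, hmy⟩ := hX.exists_dist_eq_half x y
  exact ⟨m, mem_ball.2 (by linarith), mem_ball.2 (by linarith)⟩

end IsGeodesicSpace

theorem exists_gt_forall_lt_imp_le {α : Type*} [LinearOrder α] [NoMaxOrder α] {D : Set α}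
    (hD : D.Finite) (a : α) : ∃ b, a < b ∧ ∀ d ∈ D, d < b → d ≤ a := by
  obtain ⟨u, hu⟩ := exists_gt a
  obtain ⟨b, hb, hmin⟩ := exists_min_image (insert u (D ∩ Ioi a)) id
    ((hD.inter_of_left _).insert u) (insert_nonempty _ _)
  refine ⟨b, ?_, fun d hd hdb => le_of_not_gt fun had => ?_⟩
  · rcases hb with rfl | hb
    exacts [hu, hb.2]
  · exact (hmin d (mem_insert_of_mem u ⟨hd, had⟩)).not_gt hdb

theorem reflTransGen_of_closure_eq_top {Γ : Type*} [Group Γ] {S : Set Γ}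
    (hinv : ∀ s ∈ S, s⁻¹ ∈ S) (hgen : Subgroup.closure S = ⊤) {r : Γ → Γ → Prop}
    (hr : ∀ a, ∀ s ∈ S, r a (a * s)) (g : Γ) : Relation.ReflTransGen r 1 g := by
  have hg : g ∈ Subgroup.closure S := hgen ▸ Subgroup.mem_top g
  induction hg using Subgroup.closure_induction_right with
  | one => exact .refl
  | mul_right a _ s hs ih => exact ih.tail (hr a s hs)
  | mul_inv_cancel a _ s hs ih => exact ih.tail (hr a s⁻¹ (hinv s hs))

section Action

variable {Γ X : Type*} [Group Γ] [PseudoMetricSpace X] [MulAction Γ X]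

/-- The points at least as close to `x₀` as to each of its translates by elements of `S`. For
`S = Set.univ` this is the Dirichlet domain of the action centred at `x₀`. -/
def dirichletDomain (S : Set Γ) (x₀ : X) : Set X :=
  {x | ∀ g ∈ S, dist x₀ x ≤ dist (g • x₀) x}

/-- `S` contains `1`, is closed under inversion, and is closed under those products that displace
`x₀` by less than `d`. -/
structure IsLocalSubgroup (S : Set Γ) (x₀ : X) (d : ℝ) : Prop where
  one_mem : 1 ∈ S
  inv_mem : ∀ g ∈ S, g⁻¹ ∈ S
  mul_mem : ∀ g ∈ S, ∀ h ∈ S, dist ((g * h) • x₀) x₀ < d → g * h ∈ S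

theorem exists_gt_isLocalSubgroup {S : Set Γ} {x₀ : X} {r : ℝ} (hfin : S.Finite)
    (hne : S.Nonempty) (hr : 0 ≤ r) (hinv : ∀ g ∈ S, g⁻¹ ∈ S)
    (hmul : ∀ g ∈ S, ∀ h ∈ S, dist ((g * h) • x₀) x₀ ≤ r → g * h ∈ S) :
    ∃ d, r < d ∧ IsLocalSubgroup S x₀ d := by
  obtain ⟨d, hrd, hd⟩ := exists_gt_forall_lt_imp_le
    ((hfin.mul hfin).image fun g => dist (g • x₀) x₀) r
  refine ⟨d, hrd, ?_, hinv, fun g hg h hh hlt => ?_⟩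
  · obtain ⟨s, hs⟩ := hne
    simpa using hmul s hs s⁻¹ (hinv s hs) (by simpa using hr)
  · exact hmul g hg h hh (hd _ ⟨g * h, mul_mem_mul hg hh, rfl⟩ hlt)

variable [IsIsometricSMul Γ X] {S : Set Γ} {x₀ : X} {d : ℝ}

theorem inv_smul_mem_dirichletDomain {s : Γ} {z : X} :
    s⁻¹ • z ∈ dirichletDomain S x₀ ↔ ∀ g ∈ S, dist (s • x₀) z ≤ dist ((s * g) • x₀) z := by
  have hdist (y : X) : dist y (s⁻¹ • z) = dist (s • y) z := by rw [← dist_smul s, smul_inv_smul]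
  simp only [dirichletDomain, mem_ofPred_eq, hdist, mul_smul]

namespace IsLocalSubgroup

theorem exists_inv_smul_mem_dirichletDomain (hS : IsLocalSubgroup S x₀ d) (hfin : S.Finite)
    {z : X} (hz : dist x₀ z < d / 2) : ∃ s ∈ S, s⁻¹ • z ∈ dirichletDomain S x₀ := by
  obtain ⟨s, hs, hmin⟩ := exists_min_image S (fun s => dist (s • x₀) z) hfin ⟨1, hS.one_mem⟩
  refine ⟨s, hs, inv_smul_mem_dirichletDomain.2 fun g hg => ?_⟩
  by_contra! hlt
  have hsz : dist (s • x₀) z ≤ dist x₀ z := by simpa using hmin 1 hS.one_mem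
  have htri := dist_triangle_right ((s * g) • x₀) x₀ z
  exact (hmin _ (hS.mul_mem s hs g hg (by linarith))).not_gt hlt

/-- The gluing of the balls of radius `d / 2` around the translates of `x₀`, in which the balls
around `a • x₀` and `b • x₀` are identified along their intersection when `a⁻¹ * b ∈ S`. -/
def ballGluing (hS : IsLocalSubgroup S x₀ d) : PatchGluing Γ X where
  patch a := ball (a • x₀) (d / 2)
  isOpen_patch _ := isOpen_ball
  Rel a b := a⁻¹ * b ∈ S
  refl a := by simpa using hS.one_mem
  symm h := by simpa using hS.inv_mem _ h
  trans {a b c x} ha _ hc hab hbc := by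
    have hdisp : dist ((a⁻¹ * b * (b⁻¹ * c)) • x₀) x₀ = dist (c • x₀) (a • x₀) := by
      rw [← dist_smul a, smul_smul]
      group
    have hlt : dist (c • x₀) (a • x₀) < d := by
      linarith [dist_triangle_right (c • x₀) (a • x₀) x, mem_ball'.1 ha, mem_ball'.1 hc]
    simpa [mul_assoc] using hS.mul_mem _ hab _ hbc (hdisp.trans_lt hlt)

theorem isUniform_ballGluing (hS : IsLocalSubgroup S x₀ d) (hfin : S.Finite) {r₀ : ℝ}
    (hdom : dirichletDomain S x₀ ⊆ closedBall x₀ r₀) (hr₀ : 2 * r₀ < d) :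
    hS.ballGluing.IsUniform := by
  intro y
  refine ⟨ball y ((d / 2 - r₀) / 2), isOpen_ball, mem_ball_self (by linarith), ?_⟩
  rintro a ⟨w, hwa, hwy⟩
  have hw : dist x₀ (a⁻¹ • w) < d / 2 := by
    rw [← dist_smul a, smul_inv_smul]
    exact mem_ball'.1 hwa
  obtain ⟨s, hs, hsw⟩ := hS.exists_inv_smul_mem_dirichletDomain hfin hw
  have hcentre : dist w ((a * s) • x₀) ≤ r₀ := by
    calc dist w ((a * s) • x₀) = dist (s⁻¹ • a⁻¹ • w) x₀ := by
          rw [← dist_smul (a * s) (s⁻¹ • _), mul_smul a s (s⁻¹ • _), smul_inv_smul, smul_inv_smul]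
      _ ≤ r₀ := hdom hsw
  refine ⟨a * s, fun v hv => ?_, by simpa [ballGluing] using hs⟩
  have hvw : dist v w < d / 2 - r₀ := by
    linarith [dist_triangle_right v w y, mem_ball.1 hv, mem_ball.1 hwy]
  exact mem_ball.2 (by linarith [dist_triangle v w ((a * s) • x₀)])

end IsLocalSubgroup

end Action

theorem IsLocalSubgroup.mem_of_balls_meet {Γ X : Type*} [Group Γ] [MetricSpace X] [MulAction Γ X]
    [IsIsometricSMul Γ X] [SimplyConnectedSpace X] (hX : IsGeodesicSpace X) {S : Set Γ} {x₀ : X}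
    {d r₀ : ℝ} (hS : IsLocalSubgroup S x₀ d) (hfin : S.Finite)
    (hgen : Subgroup.closure S = ⊤) (hdisp : ∀ g ∈ S, dist (g • x₀) x₀ < d)
    (hdom : dirichletDomain S x₀ ⊆ closedBall x₀ r₀) (hr₀ : 2 * r₀ < d) {g : Γ}
    (hmeet : (ball x₀ (d / 2) ∩ ball (g • x₀) (d / 2)).Nonempty) : g ∈ S := by
  have hd : 0 < d := by simpa using hdisp 1 hS.one_mem
  have hchain := reflTransGen_of_closure_eq_top hS.inv_mem hgen
    (r := fun a b => a⁻¹ * b ∈ S ∧ (ball (a • x₀) (d / 2) ∩ ball (b • x₀) (d / 2)).Nonempty)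
    (fun a s hs => ⟨by simpa using hs, hX.ball_inter_ball_nonempty <| by
      rw [mul_smul, dist_smul, dist_comm]
      linarith [hdisp s hs]⟩) g
  have hrel : (1 : Γ)⁻¹ * g ∈ S := (hS.isUniform_ballGluing hfin hdom hr₀).rel_of_reflTransGen
    (fun a => hX.isPathConnected_ball (a • x₀) (half_pos hd)) hchain
    (by simpa [ballGluing] using hmeet)
  simpa using hrel

theorem stmt_1
    {Γ X : Type*} [Group Γ] [MetricSpace X] [MulAction Γ X]
    (hiso : ∀ g : Γ, Isometry (fun x : X => g • x))
    [SimplyConnectedSpace X] (hgeo : IsGeodesicSpace X)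
    (S : Set Γ) (hfin : S.Finite) (hsymm : ∀ g ∈ S, g⁻¹ ∈ S)
    (hgen : Subgroup.closure S = ⊤)
    (x₀ : X)
    (FS : Set X) (hFS : FS = {x : X | ∀ g ∈ S, dist x₀ x ≤ dist (g • x₀) x})
    (hbdd : BddAbove ((fun x : X => dist x₀ x) '' FS))
    (r₀ : ℝ) (hr₀ : r₀ = sSup ((fun x : X => dist x₀ x) '' FS))
    (r₁ : ℝ) (hr₁ : 2 * r₀ < r₁)
    (ha : ∀ g ∈ S, dist (g • x₀) x₀ ≤ r₁)
    (hb : ∀ g ∈ S, ∀ g' ∈ S, dist ((g * g') • x₀) x₀ ≤ r₁ → g * g' ∈ S) :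
    FS = {x : X | ∀ g : Γ, dist x₀ x ≤ dist (g • x₀) x} := by
  have : IsIsometricSMul Γ X := ⟨hiso⟩
  subst hFS
  change dirichletDomain S x₀ = _
  have hdom : dirichletDomain S x₀ ⊆ closedBall x₀ r₀ := fun x hx =>
    mem_closedBall'.2 (hr₀ ▸ le_csSup hbdd (mem_image_of_mem _ hx))
  refine Subset.antisymm (fun x hx g => ?_) fun x hx g _ => hx g
  rcases S.eq_empty_or_nonempty with rfl | hne
  · have hg : g ∈ Subgroup.closure (∅ : Set Γ) := hgen ▸ Subgroup.mem_top g
    rw [Subgroup.closure_empty, Subgroup.mem_bot] at hg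
    rw [hg, one_smul]
  have hxr₀ : dist x₀ x ≤ r₀ := mem_closedBall'.1 (hdom hx)
  have hr₁_nonneg : 0 ≤ r₁ := by linarith [dist_nonneg (x := x₀) (y := x)]
  obtain ⟨d, hr₁d, hS⟩ := exists_gt_isLocalSubgroup hfin hne hr₁_nonneg hsymm hb
  by_contra! hlt
  have hgS : g ∈ S := hS.mem_of_balls_meet hgeo hfin hgen (fun s hs => (ha s hs).trans_lt hr₁d)
    hdom (hr₁.trans hr₁d) ⟨x, mem_ball'.2 (by linarith), mem_ball'.2 (by linarith)⟩
  exact (hx g hgS).not_gt hlt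
end

section
/- Under these hypotheses, the group Γ is generated by the subset S₀ = {g ∈ S : d(g.0, 0) ≤ 2r₀}. -/
/-!
By induction on the displacement `D = dist (g • x₀) x₀` we write every `g ∈ S` as a product of
elements of `S` of displacement at most `2 * r₀`. If `2 * r₀ < D`, let `y` be a midpoint of `x₀` and
`g • x₀`, and among the points `h • x₀` with `h ∈ S` take one nearest to `y`. Then `h⁻¹ • y` lies in
the cell `F_S`: a competitor `(h * k) • x₀` strictly closer to `y` would be within `D / 2 + D / 2`
of `x₀`, so that `h * k ∈ S`. Hence `h • x₀` is within `r₀ < D / 2` of `y`, and in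
`g = h * (h⁻¹ * g)` both factors have displacement less than `D`.
-/

/-- Any two points of `X` have a metric midpoint. Nothing is said about paths, so that `ℚ`
qualifies although it is not geodesic. -/
def HasMidpoints (X : Type*) [PseudoMetricSpace X] : Prop :=
  ∀ x y : X, ∃ m, dist x m = dist x y / 2 ∧ dist m y = dist x y / 2

theorem IsGeodesicSpace.hasMidpoints {X : Type*} [MetricSpace X] (hX : IsGeodesicSpace X) :
    HasMidpoints X := by
  intro x y
  obtain ⟨γ, hγ₀, hγ₁, hγ⟩ := hX x y
  have hxy : 0 ≤ dist x y := dist_nonneg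
  have hmem : dist x y / 2 ∈ Set.Icc 0 (dist x y) := ⟨by linarith, by linarith⟩
  refine ⟨γ (dist x y / 2), ?_, ?_⟩
  · have h := hγ 0 (Set.left_mem_Icc.2 hxy) _ hmem
    rwa [hγ₀, zero_sub, abs_neg, abs_of_nonneg hmem.1] at h
  · have h := hγ _ hmem _ (Set.right_mem_Icc.2 hxy)
    rwa [hγ₁, abs_sub_comm, sub_half, abs_of_nonneg hmem.1] at h

section

variable {Γ X : Type*} [Group Γ] [PseudoMetricSpace X] [MulAction Γ X]

/-- The Dirichlet cell `F_S` of the base point `x₀` relative to `S`: the points that are no closer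
to any translate `g • x₀` with `g ∈ S` than to `x₀` itself. -/
def dirichletCell (S : Set Γ) (x₀ : X) : Set X :=
  {x | ∀ g ∈ S, dist x₀ x ≤ dist (g • x₀) x}

/-- `S` is a symmetric set of elements displacing `x₀` by at most `r`, and it contains every product
of two of its elements that displaces `x₀` by at most `r`. -/
structure IsLocalSubgroup_s3 (S : Set Γ) (x₀ : X) (r : ℝ) : Prop where
  inv_mem : ∀ g ∈ S, g⁻¹ ∈ S
  dist_smul_le : ∀ g ∈ S, dist (g • x₀) x₀ ≤ r
  mul_mem : ∀ g ∈ S, ∀ g' ∈ S, dist ((g * g') • x₀) x₀ ≤ r → g * g' ∈ S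

theorem IsLocalSubgroup_s3.one_mem {S : Set Γ} {x₀ : X} {r : ℝ} (hS : IsLocalSubgroup_s3 S x₀ r)
    (hne : S.Nonempty) : 1 ∈ S := by
  obtain ⟨g, hg⟩ := hne
  have hr : 0 ≤ r := dist_nonneg.trans (hS.dist_smul_le g hg)
  simpa [hr] using hS.mul_mem g hg g⁻¹ (hS.inv_mem g hg)

variable [IsIsometricSMul Γ X] {S : Set Γ} {x₀ : X} {r₀ r : ℝ}

theorem dist_inv_smul_right (h : Γ) (x y : X) : dist x (h⁻¹ • y) = dist (h • x) y := by
  rw [← dist_smul h, smul_inv_smul]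

theorem inv_smul_mem_dirichletCell_iff {h : Γ} {y : X} :
    h⁻¹ • y ∈ dirichletCell S x₀ ↔ ∀ k ∈ S, dist (h • x₀) y ≤ dist ((h * k) • x₀) y := by
  simp only [dirichletCell, Set.mem_ofPred_eq, dist_inv_smul_right, mul_smul]

theorem IsLocalSubgroup_s3.exists_inv_smul_mem_dirichletCell (hS : IsLocalSubgroup_s3 S x₀ r)
    (hfin : S.Finite) (hne : S.Nonempty) {y : X} (hy : dist x₀ y ≤ r / 2) :
    ∃ h ∈ S, h⁻¹ • y ∈ dirichletCell S x₀ := by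
  obtain ⟨h, hh, hmin⟩ := Set.exists_min_image S (fun h ↦ dist (h • x₀) y) hfin hne
  have hhy : dist (h • x₀) y ≤ dist x₀ y := by simpa using hmin 1 (hS.one_mem hne)
  refine ⟨h, hh, inv_smul_mem_dirichletCell_iff.2 fun k hk ↦ ?_⟩
  by_contra! hlt
  have hhk : dist ((h * k) • x₀) x₀ ≤ r := by
    linarith [dist_triangle_right ((h * k) • x₀) x₀ y]
  exact hlt.not_ge (hmin _ (hS.mul_mem h hh k hk hhk))

theorem IsLocalSubgroup_s3.exists_mul_eq_of_two_mul_lt_dist (hS : IsLocalSubgroup_s3 S x₀ r)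
    (hX : HasMidpoints X) (hfin : S.Finite) (hr₀ : ∀ x ∈ dirichletCell S x₀, dist x₀ x ≤ r₀)
    {g : Γ} (hg : g ∈ S) (hlt : 2 * r₀ < dist (g • x₀) x₀) :
    ∃ h ∈ S, ∃ k ∈ S, h * k = g ∧
      dist (h • x₀) x₀ < dist (g • x₀) x₀ ∧ dist (k • x₀) x₀ < dist (g • x₀) x₀ := by
  obtain ⟨y, hgy, hyx⟩ := hX (g • x₀) x₀
  have hgr := hS.dist_smul_le g hg
  obtain ⟨h, hh, hcell⟩ :=
    hS.exists_inv_smul_mem_dirichletCell hfin ⟨g, hg⟩ (y := y) (by rw [dist_comm]; linarith)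
  have hhy : dist (h • x₀) y ≤ r₀ := dist_inv_smul_right h x₀ y ▸ hr₀ _ hcell
  have hh_lt : dist (h • x₀) x₀ < dist (g • x₀) x₀ := by
    linarith [dist_triangle (h • x₀) y x₀]
  have hk_lt : dist ((h⁻¹ * g) • x₀) x₀ < dist (g • x₀) x₀ := by
    rw [mul_smul, dist_comm, dist_inv_smul_right]
    linarith [dist_triangle_right (h • x₀) (g • x₀) y]
  have hk : h⁻¹ * g ∈ S := hS.mul_mem _ (hS.inv_mem h hh) g hg (hk_lt.le.trans hgr)
  exact ⟨h, hh, h⁻¹ * g, hk, mul_inv_cancel_left h g, hh_lt, hk_lt⟩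

theorem stmt_3_general (hX : HasMidpoints X) (hfin : S.Finite) (hS : IsLocalSubgroup_s3 S x₀ r)
    (hr₀ : ∀ x ∈ dirichletCell S x₀, dist x₀ x ≤ r₀) :
    Subgroup.closure {g ∈ S | dist (g • x₀) x₀ ≤ 2 * r₀} = Subgroup.closure S := by
  refine le_antisymm (Subgroup.closure_mono (Set.sep_subset _ _))
    ((Subgroup.closure_le _).2 fun g hg ↦ ?_)
  have hwf : S.WellFoundedOn ((fun g : Γ ↦ dist (g • x₀) x₀) ⁻¹'o (· < ·)) := hfin.wellFoundedOn
  refine hwf.induction hg fun g hg ih ↦ ?_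
  rcases le_or_gt (dist (g • x₀) x₀) (2 * r₀) with hle | hlt
  · exact Subgroup.subset_closure ⟨hg, hle⟩
  · obtain ⟨h, hh, k, hk, rfl, hh_lt, hk_lt⟩ :=
      hS.exists_mul_eq_of_two_mul_lt_dist hX hfin hr₀ hg hlt
    exact mul_mem (ih h hh hh_lt) (ih k hk hk_lt)

end

theorem stmt_3
    {Γ X : Type*} [Group Γ] [MetricSpace X] [MulAction Γ X]
    (hiso : ∀ g : Γ, Isometry (fun x : X => g • x))
    [SimplyConnectedSpace X] (hgeo : IsGeodesicSpace X)
    (S : Set Γ) (hfin : S.Finite) (hsymm : ∀ g ∈ S, g⁻¹ ∈ S)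
    (hgen : Subgroup.closure S = ⊤)
    (x₀ : X)
    (FS : Set X) (hFS : FS = {x : X | ∀ g ∈ S, dist x₀ x ≤ dist (g • x₀) x})
    (hbdd : BddAbove ((fun x : X => dist x₀ x) '' FS))
    (r₀ : ℝ) (hr₀ : r₀ = sSup ((fun x : X => dist x₀ x) '' FS))
    (r₁ : ℝ) (hr₁ : 2 * r₀ < r₁)
    (ha : ∀ g ∈ S, dist (g • x₀) x₀ ≤ r₁)
    (hb : ∀ g ∈ S, ∀ g' ∈ S, dist ((g * g') • x₀) x₀ ≤ r₁ → g * g' ∈ S) :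
    Subgroup.closure {g ∈ S | dist (g • x₀) x₀ ≤ 2 * r₀} = ⊤ := by
  have : IsIsometricSMul Γ X := ⟨hiso⟩
  subst hFS hr₀
  exact (stmt_3_general hgeo.hasMidpoints hfin ⟨hsymm, ha, hb⟩
    fun x hx ↦ le_csSup hbdd ⟨x, hx, rfl⟩).trans hgen
end
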